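/- Let G be a simple graph on a finite vertex type V, let t assign to each edge of G a nonnegative real traversal time, let u, v ∈ V, and let p be a path from u to v in G. Define an edge-weight function w by w(e) = 0 if e is an edge of p and w(e) = T otherwise, where T is the sum of t(e) over all edges e of G. Then for every path q from u to v in G, the cost of p is at most the cost of q, where the cost of a path is the sum of w(e) + t(e) over its edges. In other words, p is a shortest u–v path with respect to the combined cost w + t. -/

import Mathlib

theorem path_eq_of_edges_subset {V : Type*} {G : SimpleGraph V} {u v : V}
    (p : G.Walk u v) (hp : p.IsPath) (q : G.Walk u v) (hq : q.IsPath)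
    (h : ∀ e ∈ q.edges, e ∈ p.edges) : q = p := by
  induction p with
  | nil => exact SimpleGraph.Walk.isPath_iff_eq_nil.mp hq
  | @cons u w v ha p' ih =>
    cases q with
    | nil =>
      have := SimpleGraph.Walk.isPath_iff_eq_nil.mp hp
      simp at this
    | @cons _ w' _ hb q' =>
      have h1 := hp.eq_snd_of_mem_edges (h s(u, w') (by simp))
      simp only [SimpleGraph.Walk.snd_cons] at h1
      subst h1
      rw [SimpleGraph.Walk.cons_isPath_iff] at hp hq
      rw [ih hp.1 q' hq.1 ?_]
      intro e he
      have h2 := h e (by simp [he])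
      rw [SimpleGraph.Walk.edges_cons, List.mem_cons] at h2
      rcases h2 with rfl | h2
      · exact absurd (q'.fst_mem_support_of_mem_edges he) hq.2
      · exact h2

/-- Hardness-reduction key step: given nonnegative traversal times `t` on the edges
of a simple graph `G` on a finite vertex type, a `u`–`v` path `p`, and weights
`w e = 0` for edges of `p` and `w e = T` otherwise, where `T` is the total traversal
time of all edges of `G`, the path `p` has minimal combined cost `w + t` among all
`u`–`v` paths. -/
theorem stmt_12 {V : Type*} [Fintype V] [DecidableEq V] (G : SimpleGraph V)
    [DecidableRel G.Adj] (t : Sym2 V → ℝ) (ht : ∀ e ∈ G.edgeSet, 0 ≤ t e)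
    (u v : V) (p : G.Walk u v) (hp : p.IsPath)
    (T : ℝ) (hT : T = ∑ e ∈ G.edgeFinset, t e)
    (w : Sym2 V → ℝ) (hw : ∀ e, w e = if e ∈ p.edges then 0 else T) :
    ∀ q : G.Walk u v, q.IsPath →
      (p.edges.map (fun e => w e + t e)).sum ≤ (q.edges.map (fun e => w e + t e)).sum := by
  intro q hq
  have hT0 : 0 ≤ T := by
    rw [hT]
    exact Finset.sum_nonneg fun e he => ht e (SimpleGraph.mem_edgeFinset.mp he)
  by_cases hsub : ∀ e ∈ q.edges, e ∈ p.edges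
  · rw [path_eq_of_edges_subset p hp q hq hsub]
  · push Not at hsub
    obtain ⟨e, heq, hep⟩ := hsub
    have hpT : (p.edges.map (fun e => w e + t e)).sum ≤ T := by
      have h1 : p.edges.map (fun e => w e + t e) = p.edges.map t := by
        apply List.map_congr_left
        intro e he
        simp [hw, he]
      rw [h1, ← List.sum_toFinset t hp.isTrail.edges_nodup, hT]
      apply Finset.sum_le_sum_of_subset_of_nonneg
      · intro e he
        exact SimpleGraph.mem_edgeFinset.mpr (p.edges_subset_edgeSet (List.mem_toFinset.mp he))
      · intro e he _
        exact ht e (SimpleGraph.mem_edgeFinset.mp he)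
    have hnn : ∀ x ∈ q.edges.map (fun e => w e + t e), 0 ≤ x := by
      intro x hx
      obtain ⟨f, hf, rfl⟩ := List.mem_map.mp hx
      have h1 := ht f (q.edges_subset_edgeSet hf)
      have h2 : 0 ≤ w f := by
        rw [hw]
        split_ifs
        · exact le_rfl
        · exact hT0
      exact add_nonneg h2 h1
    have h3 := List.single_le_sum hnn (w e + t e) (List.mem_map.mpr ⟨e, heq, rfl⟩)
    have h4 := ht e (q.edges_subset_edgeSet heq)
    have h5 : w e = T := by simp [hw, hep]
    linarith
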